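/- Let ω₁, ω₂ ∈ ℂ be linearly independent over ℝ and L = ℤω₁ + ℤω₂ the lattice they generate, ℘ the associated Weierstrass function and g₂, g₃ its invariants. Then for every z ∈ ℂ with z ∉ L, the derivative of ℘ satisfies ℘'(z)² = 4℘(z)³ − g₂℘(z) − g₃. -/

import Mathlib

/-- The Weierstrass `℘`-function of the lattice `L = ℤω₁ + ℤω₂`:
`℘(z) = 1/z² + ∑_{ω ∈ L, ω ≠ 0} (1/(z−ω)² − 1/ω²)`. -/
noncomputable def weierstrassP (ω₁ ω₂ : ℂ) (z : ℂ) : ℂ :=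
  1 / z ^ 2 + ∑' p : {q : ℤ × ℤ // q ≠ 0},
    (1 / (z - ((p.1.1 : ℂ) * ω₁ + (p.1.2 : ℂ) * ω₂)) ^ 2 -
      1 / ((p.1.1 : ℂ) * ω₁ + (p.1.2 : ℂ) * ω₂) ^ 2)

/-- The first lattice invariant `g₂ = 60 ∑_{ω ∈ L, ω ≠ 0} ω⁻⁴`. -/
noncomputable def latticeG₂ (ω₁ ω₂ : ℂ) : ℂ :=
  60 * ∑' p : {q : ℤ × ℤ // q ≠ 0},
    1 / ((p.1.1 : ℂ) * ω₁ + (p.1.2 : ℂ) * ω₂) ^ 4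

/-- The second lattice invariant `g₃ = 140 ∑_{ω ∈ L, ω ≠ 0} ω⁻⁶`. -/
noncomputable def latticeG₃ (ω₁ ω₂ : ℂ) : ℂ :=
  140 * ∑' p : {q : ℤ × ℤ // q ≠ 0},
    1 / ((p.1.1 : ℂ) * ω₁ + (p.1.2 : ℂ) * ω₂) ^ 6

/-!
The difference of the two sides is periodic, and its pole at the origin cancels in the Laurent
expansion; it therefore extends to a bounded entire function vanishing at `0`, so it is zero. This
is `PeriodPair.derivWeierstrassP_sq`, where `℘`, `g₂` and `g₃` are series over all of `L`. As
`1 / 0 = 0` in Lean, the term `ω = 0` adds nothing to the inverse power sums, while in `℘` it is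
the leading `1 / z ^ 2`.
-/

section NonzeroLatticePoints

variable {E : Type*} [AddCommMonoid E] [TopologicalSpace E]

theorem tsum_ite_zero_eq_tsum_ne {α : Type*} [DecidableEq α] (f : α → E) (a : α) :
    ∑' x, (if x = a then 0 else f x) = ∑' x : {x // x ≠ a}, f x := by
  refine Eq.trans ?_ (tsum_subtype {x | x ≠ a} f).symm
  simp [Set.indicator_apply]

theorem tsum_lattice_ite_zero_eq_tsum_intPair (L : PeriodPair) (f : ℂ → E) :
    ∑' l : L.lattice, (if (l : ℂ) = 0 then 0 else f l) =
      ∑' p : {q : ℤ × ℤ // q ≠ 0}, f ((p.1.1 : ℂ) * L.ω₁ + (p.1.2 : ℂ) * L.ω₂) := by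
  rw [← tsum_ite_zero_eq_tsum_ne fun q : ℤ × ℤ => f (q.1 * L.ω₁ + q.2 * L.ω₂),
    ← L.latticeEquivProd.symm.toEquiv.tsum_eq]
  simp [← PeriodPair.latticeEquiv_symm_apply]

end NonzeroLatticePoints

section PeriodPairComparison

variable (L : PeriodPair)

theorem weierstrassP_eq_periodPair_weierstrassP : weierstrassP L.ω₁ L.ω₂ = L.weierstrassP := by
  funext z
  calc weierstrassP L.ω₁ L.ω₂ z
    _ = 1 / z ^ 2 + L.weierstrassPExcept 0 z := by
      rw [weierstrassP, PeriodPair.weierstrassPExcept,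
        tsum_lattice_ite_zero_eq_tsum_intPair L fun l => 1 / (z - l) ^ 2 - 1 / l ^ 2]
    _ = L.weierstrassP z := by
      simpa [add_comm] using L.weierstrassPExcept_add 0 z

theorem tsum_intPair_one_div_pow_eq_G {n : ℕ} (hn : n ≠ 0) :
    ∑' p : {q : ℤ × ℤ // q ≠ 0}, 1 / ((p.1.1 : ℂ) * L.ω₁ + (p.1.2 : ℂ) * L.ω₂) ^ n = L.G n := by
  rw [PeriodPair.G, ← tsum_lattice_ite_zero_eq_tsum_intPair L fun l => 1 / l ^ n]
  refine tsum_congr fun l => ?_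
  split_ifs with hl <;> simp [hl, hn]

theorem latticeG₂_eq_periodPair_g₂ : latticeG₂ L.ω₁ L.ω₂ = L.g₂ := by
  rw [latticeG₂, PeriodPair.g₂, tsum_intPair_one_div_pow_eq_G L four_ne_zero]

theorem latticeG₃_eq_periodPair_g₃ : latticeG₃ L.ω₁ L.ω₂ = L.g₃ := by
  rw [latticeG₃, PeriodPair.g₃, tsum_intPair_one_div_pow_eq_G L (by decide)]

end PeriodPairComparison

/-- **The Weierstrass differential equation.**
If `ω₁, ω₂` are linearly independent over `ℝ` and `z` is not in the lattice
`L = ℤω₁ + ℤω₂`, then `℘'(z)² = 4 ℘(z)³ − g₂ ℘(z) − g₃`. -/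
theorem weierstrassP_deriv_sq (ω₁ ω₂ : ℂ)
    (hind : LinearIndependent ℝ ![ω₁, ω₂]) (z : ℂ)
    (hz : ∀ m n : ℤ, z ≠ (m : ℂ) * ω₁ + (n : ℂ) * ω₂) :
    (deriv (weierstrassP ω₁ ω₂) z) ^ 2 =
      4 * weierstrassP ω₁ ω₂ z ^ 3 - latticeG₂ ω₁ ω₂ * weierstrassP ω₁ ω₂ z -
        latticeG₃ ω₁ ω₂ := by
  let L : PeriodPair := ⟨ω₁, ω₂, hind⟩
  have notMem_lattice : z ∉ L.lattice := fun h =>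
    let ⟨m, n, hmn⟩ := PeriodPair.mem_lattice.mp h
    hz m n hmn.symm
  rw [weierstrassP_eq_periodPair_weierstrassP L, latticeG₂_eq_periodPair_g₂ L,
    latticeG₃_eq_periodPair_g₃ L, L.deriv_weierstrassP]
  exact L.derivWeierstrassP_sq z notMem_lattice
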